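/- arXiv:2105.04896 — 2 statements merged into one kernel-verified Lean document; each statement's English description precedes it below -/
import Mathlib

section
/- Let M be a random variable with values in the nonnegative integers and let c ∈ ℝ. If E(M·1{M ≤ n}) = log n + c + o(1) as n → ∞, then P(M ≥ n) ∼ 1/n as n → ∞, i.e. lim_{n→∞} n·P(M ≥ n) = 1. -/
open MeasureTheory ProbabilityTheory Filter

/-!
Write `T n = E(M·1{M ≤ n})`, `q n = P(M ≥ n)` and `T n = g n + e n` with `e n → 0`. Of
`g n = log n + c` only `n * (g (n + 1) - g n) → 1` matters. The increments of `T` determine those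
of `q`, through `T (n + 1) - T n = (n + 1) * (q (n + 1) - q (n + 2))`, but the increments of `e` are
not small compared with those of `g`. Summation by parts removes them: the decrement of
`q (n + 1) + e n / (n + 1)` is
`((n + 2) * (g (n + 1) - g n) + e (n + 1)) / ((n + 1) * (n + 2))`, which is asymptotic to the
decrement of `1 / (n + 1)`. By the Stolz–Cesàro theorem `(n + 1) * q (n + 1) + e n → 1`.
-/

theorem eventually_le_of_tendsto_of_eventually_succ_le {α : Type*} [TopologicalSpace α]
    [Preorder α] [ClosedIicTopology α] {v : ℕ → α} {l : α} (hv : Tendsto v atTop (nhds l))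
    (h : ∀ᶠ n in atTop, v (n + 1) ≤ v n) : ∀ᶠ n in atTop, l ≤ v n := by
  obtain ⟨N, hN⟩ := eventually_atTop.1 h
  have hanti : AntitoneOn v (Set.Ici N) := antitoneOn_nat_Ici_of_succ_le hN
  filter_upwards [eventually_ge_atTop N] with n hn
  refine le_of_tendsto hv ?_
  filter_upwards [eventually_ge_atTop n] with m hm
  exact hanti hn (hn.trans hm) hm

section StolzCesaro

variable {𝕜 : Type*} [Field 𝕜] [LinearOrder 𝕜] [IsStrictOrderedRing 𝕜] [TopologicalSpace 𝕜]
  [OrderTopology 𝕜] {u d : ℕ → 𝕜}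

theorem eventually_le_div_of_eventually_le_sub_div_sub {b : 𝕜} (hu : Tendsto u atTop (nhds 0))
    (hd : Tendsto d atTop (nhds 0)) (hanti : StrictAnti d)
    (h : ∀ᶠ n in atTop, b ≤ (u n - u (n + 1)) / (d n - d (n + 1))) :
    ∀ᶠ n in atTop, b ≤ u n / d n := by
  have hlim : Tendsto (fun n ↦ u n - b * d n) atTop (nhds 0) := by
    simpa using hu.sub (hd.const_mul b)
  have hnonneg : ∀ᶠ n in atTop, 0 ≤ u n - b * d n := by
    refine eventually_le_of_tendsto_of_eventually_succ_le hlim ?_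
    filter_upwards [h] with n hn
    rw [le_div_iff₀ (sub_pos.2 (hanti n.lt_succ_self))] at hn
    linarith
  filter_upwards [hnonneg] with n hn
  have hpos : 0 < d n :=
    (hanti.antitone.le_of_tendsto hd (n + 1)).trans_lt (hanti n.lt_succ_self)
  exact (le_div_iff₀ hpos).2 (sub_nonneg.1 hn)

theorem tendsto_div_of_tendsto_sub_div_sub {l : 𝕜} (hu : Tendsto u atTop (nhds 0))
    (hd : Tendsto d atTop (nhds 0)) (hanti : StrictAnti d)
    (h : Tendsto (fun n ↦ (u n - u (n + 1)) / (d n - d (n + 1))) atTop (nhds l)) :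
    Tendsto (fun n ↦ u n / d n) atTop (nhds l) := by
  refine tendsto_order.2 ⟨fun a ha ↦ ?_, fun a ha ↦ ?_⟩
  · obtain ⟨b, hab, hbl⟩ := exists_between ha
    filter_upwards [eventually_le_div_of_eventually_le_sub_div_sub hu hd hanti
      (h.eventually_const_le hbl)] with n hn
    exact hab.trans_le hn
  · obtain ⟨b, hlb, hba⟩ := exists_between ha
    have hneg : ∀ᶠ n in atTop, -b ≤ (-u n - -u (n + 1)) / (d n - d (n + 1)) := by
      filter_upwards [h.eventually_le_const hlb] with n hn
      rwa [neg_sub_neg, ← neg_sub, neg_div, neg_le_neg_iff]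
    filter_upwards [eventually_le_div_of_eventually_le_sub_div_sub (by simpa using hu.neg) hd
      hanti hneg] with n hn
    rw [neg_div, neg_le_neg_iff] at hn
    exact hn.trans_lt hba

end StolzCesaro

theorem tendsto_natCast_add_mul {x : ℕ → ℝ} {a : ℝ} (r : ℝ)
    (h : Tendsto (fun n : ℕ ↦ (n : ℝ) * x n) atTop (nhds a)) :
    Tendsto (fun n : ℕ ↦ ((n : ℝ) + r) * x n) atTop (nhds a) := by
  have hratio : Tendsto (fun n : ℕ ↦ 1 + r / (n : ℝ)) atTop (nhds 1) := by
    simpa using (tendsto_const_div_atTop_nhds_zero_nat r).const_add 1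
  have hprod := hratio.mul h
  rw [one_mul] at hprod
  refine hprod.congr' ?_
  filter_upwards [eventually_ne_atTop 0] with n hn
  field_simp

theorem tendsto_natCast_mul_log_succ_sub_log :
    Tendsto (fun n : ℕ ↦ (n : ℝ) * (Real.log (n + 1 : ℕ) - Real.log n)) atTop (nhds 1) := by
  refine ((Real.tendsto_mul_log_one_add_div_atTop 1).comp tendsto_natCast_atTop_atTop).congr' ?_
  filter_upwards [eventually_ne_atTop 0] with n hn
  have hn' : (n : ℝ) ≠ 0 := Nat.cast_ne_zero.2 hn
  rw [Function.comp_apply, ← Real.log_div (by positivity) hn', Nat.cast_succ, add_div, div_self hn']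

theorem sub_div_one_div_sub_one_div_of_mul_sub_eq {𝕜 : Type*} [Field 𝕜] {x q₀ q₁ e₀ e₁ δ : 𝕜}
    (hx : x ≠ 0) (hx' : x + 1 ≠ 0) (h : x * (q₀ - q₁) = δ + (e₁ - e₀)) :
    (q₀ + e₀ / x - (q₁ + e₁ / (x + 1))) / (1 / x - 1 / (x + 1)) = (x + 1) * δ + e₁ := by
  have hden : 1 / x - 1 / (x + 1) = 1 / (x * (x + 1)) := by
    field_simp
    ring
  rw [hden, div_div_eq_mul_div, div_one]
  calc (q₀ + e₀ / x - (q₁ + e₁ / (x + 1))) * (x * (x + 1))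
      = (x + 1) * (x * (q₀ - q₁) + e₀) - x * e₁ := by
        field_simp
        ring
    _ = (x + 1) * δ + e₁ := by
        rw [h]
        ring

theorem tendsto_natCast_mul_of_sub_eq_mul_sub {T q g : ℕ → ℝ} {a : ℝ}
    (hq : Tendsto q atTop (nhds 0))
    (hTq : ∀ n, T (n + 1) - T n = (n + 1) * (q (n + 1) - q (n + 2)))
    (hTg : Tendsto (fun n ↦ T n - g n) atTop (nhds 0))
    (hg : Tendsto (fun n : ℕ ↦ (n : ℝ) * (g (n + 1) - g n)) atTop (nhds a)) :
    Tendsto (fun n : ℕ ↦ (n : ℝ) * q n) atTop (nhds a) := by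
  set e : ℕ → ℝ := fun n ↦ T n - g n
  let d : ℕ → ℝ := fun n ↦ 1 / ((n : ℝ) + 1)
  let u : ℕ → ℝ := fun n ↦ q (n + 1) + e n / ((n : ℝ) + 1)
  have hd : Tendsto d atTop (nhds 0) := tendsto_one_div_add_atTop_nhds_zero_nat
  have hd_anti : StrictAnti d := fun m n hmn ↦ Nat.one_div_lt_one_div hmn
  have hu : Tendsto u atTop (nhds 0) := by
    simpa [u, d, div_eq_mul_inv] using ((tendsto_add_atTop_iff_nat 1).2 hq).add (hTg.mul hd)
  have hquot (n : ℕ) :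
      (u n - u (n + 1)) / (d n - d (n + 1)) = (n + 2) * (g (n + 1) - g n) + e (n + 1) := by
    have hincr : ((n : ℝ) + 1) * (q (n + 1) - q (n + 2))
        = g (n + 1) - g n + (e (n + 1) - e n) := by
      rw [← hTq]
      ring
    simp only [u, d, Nat.cast_succ]
    rw [sub_div_one_div_sub_one_div_of_mul_sub_eq (by positivity) (by positivity) hincr]
    ring
  have hquot_tendsto : Tendsto (fun n ↦ (u n - u (n + 1)) / (d n - d (n + 1))) atTop (nhds a) := by
    simpa only [add_zero, hquot] using
      (tendsto_natCast_add_mul 2 hg).add ((tendsto_add_atTop_iff_nat 1).2 hTg)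
  have hlim : Tendsto (fun n ↦ u n / d n - e n) atTop (nhds a) := by
    simpa only [sub_zero] using
      (tendsto_div_of_tendsto_sub_div_sub hu hd hd_anti hquot_tendsto).sub hTg
  refine (tendsto_add_atTop_iff_nat 1).1 (hlim.congr fun n ↦ ?_)
  simp only [u, d, Nat.cast_succ]
  field_simp
  ring

section NatValued

variable {Ω : Type*} [MeasurableSpace Ω] {μ : Measure Ω} [IsFiniteMeasure μ] {M : Ω → ℕ}

theorem tendsto_measureReal_le_atTop_zero (hM : AEMeasurable M μ) :
    Tendsto (fun n : ℕ ↦ μ.real {ω | n ≤ M ω}) atTop (nhds 0) := by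
  have hempty : ⋂ n : ℕ, {ω | n ≤ M ω} = ∅ :=
    Set.eq_empty_of_forall_notMem fun ω hω ↦ (M ω).not_succ_le_self (Set.mem_iInter.1 hω _)
  have hlim := tendsto_measure_iInter_atTop (μ := μ) (s := fun n : ℕ ↦ {ω | n ≤ M ω})
    (fun _ ↦ nullMeasurableSet_le aemeasurable_const hM) (fun _ _ hmn _ hω ↦ hmn.trans hω)
    ⟨0, measure_ne_top _ _⟩
  rw [hempty, measure_empty] at hlim
  exact (ENNReal.tendsto_toReal ENNReal.zero_ne_top).comp hlim

theorem measureReal_le_sub_measureReal_succ_le (hM : AEMeasurable M μ) (n : ℕ) :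
    μ.real {ω | n ≤ M ω} - μ.real {ω | n + 1 ≤ M ω} = μ.real {ω | M ω = n} := by
  have hunion : {ω | n ≤ M ω} = {ω | M ω = n} ∪ {ω | n + 1 ≤ M ω} := by
    ext ω
    simp only [Set.mem_union, Set.mem_ofPred_eq]
    lia
  have hdisj : Disjoint {ω | M ω = n} {ω | n + 1 ≤ M ω} :=
    Set.disjoint_left.2 fun ω (hω : M ω = n) (hω' : n + 1 ≤ M ω) ↦ by lia
  rw [hunion, measureReal_union₀ (nullMeasurableSet_le aemeasurable_const hM) hdisj.aedisjoint,
    add_sub_cancel_right]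

theorem integrable_ite_le_natCast (hM : AEMeasurable M μ) (n : ℕ) :
    Integrable (fun ω ↦ if M ω ≤ n then (M ω : ℝ) else 0) μ := by
  have hmeas : Measurable fun k : ℕ ↦ if k ≤ n then (k : ℝ) else 0 := .of_discrete
  refine .of_bound (C := n) (hmeas.comp_aemeasurable hM).aestronglyMeasurable
    (ae_of_all _ fun ω ↦ ?_)
  split_ifs with hω
  · simpa using hω
  · simp

theorem integral_ite_le_succ_sub_integral_ite_le (hM : AEMeasurable M μ) (n : ℕ) :
    (∫ ω, (if M ω ≤ n + 1 then (M ω : ℝ) else 0) ∂μ) - ∫ ω, (if M ω ≤ n then (M ω : ℝ) else 0) ∂μ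
      = (n + 1) * μ.real {ω | M ω = n + 1} := by
  have hdiff (ω : Ω) : (if M ω ≤ n + 1 then (M ω : ℝ) else 0) - (if M ω ≤ n then (M ω : ℝ) else 0)
      = {ω | M ω = n + 1}.indicator (fun _ ↦ (n + 1 : ℝ)) ω := by
    rcases lt_trichotomy (M ω) (n + 1) with hlt | heq | hgt
    · simp [hlt.le, Nat.le_of_lt_succ hlt, hlt.ne]
    · simp [heq]
    · simp [hgt.not_ge, (n.lt_succ_self.trans hgt).not_ge, hgt.ne']
  rw [← integral_sub (integrable_ite_le_natCast hM _) (integrable_ite_le_natCast hM _),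
    integral_congr_ae (ae_of_all _ hdiff),
    integral_indicator₀ (nullMeasurableSet_eq_fun hM aemeasurable_const), setIntegral_const,
    smul_eq_mul, mul_comm]

theorem tail_of_truncated_expectation_general {g : ℕ → ℝ} {a : ℝ} (hM : AEMeasurable M μ)
    (hg : Tendsto (fun n : ℕ ↦ (n : ℝ) * (g (n + 1) - g n)) atTop (nhds a))
    (h : Tendsto (fun n : ℕ ↦ (∫ ω, (if M ω ≤ n then (M ω : ℝ) else 0) ∂μ) - g n)
      atTop (nhds 0)) :
    Tendsto (fun n : ℕ ↦ (n : ℝ) * μ.real {ω | n ≤ M ω}) atTop (nhds a) := by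
  refine tendsto_natCast_mul_of_sub_eq_mul_sub (tendsto_measureReal_le_atTop_zero hM)
    (fun n ↦ ?_) h hg
  rw [integral_ite_le_succ_sub_integral_ite_le hM, measureReal_le_sub_measureReal_succ_le hM]

end NatValued

/-- For an `ℕ`-valued random variable `M` and `c ∈ ℝ`, if
`E(M·1{M ≤ n}) = log n + c + o(1)` as `n → ∞`, then `P(M ≥ n) ∼ 1/n` as `n → ∞`,
i.e. `n · P(M ≥ n) → 1`. -/
theorem tail_of_truncated_expectation
    {Ω : Type*} [MeasurableSpace Ω] {P : Measure Ω} [IsProbabilityMeasure P]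
    (M : Ω → ℕ) (hM : Measurable M) (c : ℝ)
    (h : Tendsto (fun n : ℕ =>
        (∫ ω, (if M ω ≤ n then (M ω : ℝ) else 0) ∂P) - (Real.log n + c)) atTop (nhds 0)) :
    Tendsto (fun n : ℕ => (n : ℝ) * (P {ω | n ≤ M ω}).toReal) atTop (nhds 1) :=
  tail_of_truncated_expectation_general hM.aemeasurable
    (by simpa only [add_sub_add_right_eq_sub] using tendsto_natCast_mul_log_succ_sub_log) h
end

section
/- Let ν be the exponential distribution with rate 1 on ℝ (supported on [0,∞)). Then the mixture measure ν.bind(s ↦ gaussianReal(2s, 2s)), i.e. the law of √2·B_T + 2T where B is a standard Brownian motion and T an independent exponential random variable of parameter 1, equals the measure μ with density f with respect to Lebesgue measure, where f(x) = (1−p)(√2+1)e^{(√2+1)x} for x < 0 and f(x) = p(√2−1)e^{−(√2−1)x} for x ≥ 0, with p = (2+√2)/4. -/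
open MeasureTheory ProbabilityTheory
open scoped ENNReal

/-- The step density of the branching random walk of death positions of the boundary-case
binary branching Brownian motion: with `p = (2+√2)/4`,
`f(x) = (1-p)(√2+1)e^{(√2+1)x}` for `x < 0` and `f(x) = p(√2-1)e^{-(√2-1)x}` for `x ≥ 0`. -/
noncomputable def stepDensity (x : ℝ) : ℝ :=
  if x < 0 then (1 - (2 + Real.sqrt 2) / 4) * (Real.sqrt 2 + 1) * Real.exp ((Real.sqrt 2 + 1) * x)
  else ((2 + Real.sqrt 2) / 4) * (Real.sqrt 2 - 1) * Real.exp (-(Real.sqrt 2 - 1) * x)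

/-!
Compare characteristic functions. Mixing the laws `gaussianReal (m * s) (v * s)` over a random
time `s` evaluates the moment generating function of `s` at the Gaussian exponent
`i m t - v t² / 2`; for an exponential time of rate `r` this gives `r / (r - i m t + v t² / 2)`.
Factoring the quadratic denominator gives `α β / ((α + i t) (β - i t))`, the characteristic
function of the two-sided exponential law with rates `α` on the left and `β` on the right, where
`α β = 2 r / v` and `α - β = 2 m / v`. For `r = 1` and `m = v = 2` the rates are `√2 + 1` and
`√2 - 1`.
-/

lemma integral_withDensity_ofReal {Ω E : Type*} [MeasurableSpace Ω] {μ : Measure Ω}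
    [NormedAddCommGroup E] [NormedSpace ℝ E] {f : Ω → ℝ} (hf : AEMeasurable f μ)
    (hf₀ : 0 ≤ᵐ[μ] f) (g : Ω → E) :
    ∫ x, g x ∂(μ.withDensity fun x => ENNReal.ofReal (f x)) = ∫ x, f x • g x ∂μ := by
  rw [integral_withDensity_eq_integral_toReal_smul₀ hf.ennreal_ofReal
    (ae_of_all _ fun _ => ENNReal.ofReal_lt_top)]
  refine integral_congr_ae ?_
  filter_upwards [hf₀] with x hx
  rw [ENNReal.toReal_ofReal hx]

lemma charFun_bind_kernel {Ω E : Type*} [MeasurableSpace Ω] [NormedAddCommGroup E]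
    [InnerProductSpace ℝ E] [MeasurableSpace E] [OpensMeasurableSpace E]
    [SecondCountableTopology E] (μ : Measure Ω) [IsFiniteMeasure μ] (κ : Kernel Ω E)
    [IsFiniteKernel κ] (t : E) :
    charFun (μ.bind κ) t = ∫ ω, charFun (κ ω) t ∂μ := by
  refine Kernel.integral_comp (η := κ) (κ := Kernel.const Unit μ) (a := ())
    (f := fun x : E => Complex.exp (inner ℝ x t * Complex.I)) ?_
  refine Integrable.of_bound (C := 1) (by fun_prop) (ae_of_all _ fun x => ?_)
  rw [Complex.norm_exp_ofReal_mul_I]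

section ExponentialDistribution

lemma ae_nonneg_expMeasure (r : ℝ) : ∀ᵐ s ∂expMeasure r, 0 ≤ s := by
  have hpdf : Measurable (exponentialPDF r) := (measurable_exponentialPDFReal r).ennreal_ofReal
  refine (ae_withDensity_iff hpdf).2 (ae_of_all _ fun s hs => ?_)
  contrapose! hs
  exact exponentialPDF_of_neg hs

lemma exponentialPDFReal_eq (r x : ℝ) :
    exponentialPDFReal r x = if 0 ≤ x then r * Real.exp (-(r * x)) else 0 := by
  simp only [exponentialPDFReal, gammaPDFReal, Real.rpow_one, Real.Gamma_one, div_one, sub_self,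
    Real.rpow_zero, mul_one]

lemma exponentialPDFReal_smul_cexp (r : ℝ) (z : ℂ) (x : ℝ) :
    exponentialPDFReal r x • Complex.exp (z * x) =
      (Set.Ici 0).indicator (fun x : ℝ => r * Complex.exp ((z - r) * x)) x := by
  rw [exponentialPDFReal_eq, Set.indicator_apply, ite_smul, zero_smul]
  refine if_congr Iff.rfl ?_ rfl
  rw [sub_mul, sub_eq_neg_add, Complex.exp_add, Complex.real_smul]
  push_cast
  ring

lemma complexMGF_id_expMeasure {r : ℝ} (hr : 0 < r) {z : ℂ} (hz : z.re < r) :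
    complexMGF id (expMeasure r) z = r / (r - z) := by
  have hre : (z - r).re < 0 := by simpa using hz
  calc complexMGF id (expMeasure r) z
      = ∫ x, exponentialPDFReal r x • Complex.exp (z * x) :=
        integral_withDensity_ofReal (measurable_exponentialPDFReal r).aemeasurable
          (ae_of_all _ (exponentialPDFReal_nonneg hr)) _
    _ = r * ∫ x in Set.Ioi (0 : ℝ), Complex.exp ((z - r) * x) := by
        simp_rw [exponentialPDFReal_smul_cexp]
        rw [integral_indicator measurableSet_Ici, integral_const_mul, integral_Ici_eq_integral_Ioi]
    _ = r / (r - z) := by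
        rw [integral_exp_mul_complex_Ioi hre, Complex.ofReal_zero, mul_zero, Complex.exp_zero,
          neg_div, ← div_neg, neg_sub, mul_one_div]

end ExponentialDistribution

section GaussianMixture

/-- The kernel sending a time `s ≥ 0` to the law at time `s` of a Brownian motion with drift `m`
and variance `v` per unit of time; a negative variance `v * s` is truncated to `0`. -/
noncomputable def brownianKernel (m v : ℝ) : Kernel ℝ ℝ where
  toFun s := gaussianReal (m * s) (Real.toNNReal (v * s))
  measurable' := measurable_gaussianReal.comp
    (f := fun s : ℝ => (m * s, Real.toNNReal (v * s))) (by fun_prop)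

instance (m v : ℝ) : IsMarkovKernel (brownianKernel m v) :=
  ⟨fun _ => inferInstanceAs (IsProbabilityMeasure (gaussianReal _ _))⟩

lemma charFun_brownianKernel {m v s : ℝ} (hvs : 0 ≤ v * s) (t : ℝ) :
    charFun (brownianKernel m v s) t =
      Complex.exp ((t * m * Complex.I - v * t ^ 2 / 2) * s) := by
  have hvar : ((Real.toNNReal (v * s) : ℝ) : ℂ) = v * s := by
    rw [Real.coe_toNNReal _ hvs, Complex.ofReal_mul]
  refine (charFun_gaussianReal t).trans ?_
  rw [hvar, Complex.ofReal_mul]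
  ring_nf

lemma charFun_bind_brownianKernel {ν : Measure ℝ} [IsFiniteMeasure ν] (hν : ∀ᵐ s ∂ν, 0 ≤ s)
    (m : ℝ) {v : ℝ} (hv : 0 ≤ v) (t : ℝ) :
    charFun (ν.bind (brownianKernel m v)) t =
      complexMGF id ν (t * m * Complex.I - v * t ^ 2 / 2) := by
  rw [charFun_bind_kernel]
  refine integral_congr_ae ?_
  filter_upwards [hν] with s hs
  exact charFun_brownianKernel (mul_nonneg hv hs) t

lemma charFun_expMeasure_bind_brownianKernel {r : ℝ} (hr : 0 < r) (m : ℝ) {v : ℝ} (hv : 0 ≤ v)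
    (t : ℝ) :
    charFun ((expMeasure r).bind (brownianKernel m v)) t =
      r / (r - (t * m * Complex.I - v * t ^ 2 / 2)) := by
  have := isProbabilityMeasure_expMeasure hr
  have hre : (t * m * Complex.I - v * t ^ 2 / 2 : ℂ).re = -(v * t ^ 2 / 2) := by
    simp [← Complex.ofReal_pow]
  have hlt : (t * m * Complex.I - v * t ^ 2 / 2 : ℂ).re < r := by
    rw [hre]
    exact (neg_nonpos.2 (by positivity)).trans_lt hr
  rw [charFun_bind_brownianKernel (ae_nonneg_expMeasure r) m hv, complexMGF_id_expMeasure hr hlt]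

end GaussianMixture

section AsymmetricLaplace

lemma integrableOn_exp_mul_complex_Iio {a : ℂ} (ha : 0 < a.re) (c : ℝ) :
    IntegrableOn (fun x : ℝ => Complex.exp (a * x)) (Set.Iio c) :=
  (integrableOn_exp_mul_complex_Iic ha c).mono_set Set.Iio_subset_Iic_self

lemma integrableOn_exp_mul_complex_compl_Iio {a : ℂ} (ha : a.re < 0) (c : ℝ) :
    IntegrableOn (fun x : ℝ => Complex.exp (a * x)) (Set.Iio c)ᶜ := by
  rw [Set.compl_Iio, integrableOn_Ici_iff_integrableOn_Ioi]
  exact integrableOn_exp_mul_complex_Ioi ha c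

lemma integrable_piecewise_exp_mul_complex {a b : ℂ} (ha : 0 < a.re) (hb : b.re < 0) (c : ℝ) :
    Integrable ((Set.Iio c).piecewise (fun x : ℝ => Complex.exp (a * x))
      fun x : ℝ => Complex.exp (b * x)) :=
  Integrable.piecewise measurableSet_Iio (integrableOn_exp_mul_complex_Iio ha c)
    (integrableOn_exp_mul_complex_compl_Iio hb c)

lemma integral_piecewise_exp_mul_complex {a b : ℂ} (ha : 0 < a.re) (hb : b.re < 0) (c : ℝ) :
    ∫ x, (Set.Iio c).piecewise (fun x : ℝ => Complex.exp (a * x))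
      (fun x : ℝ => Complex.exp (b * x)) x =
        Complex.exp (a * c) / a - Complex.exp (b * c) / b := by
  rw [integral_piecewise measurableSet_Iio (integrableOn_exp_mul_complex_Iio ha c)
    (integrableOn_exp_mul_complex_compl_Iio hb c), Set.compl_Iio, ← integral_Iic_eq_integral_Iio,
    integral_Ici_eq_integral_Ioi, integral_exp_mul_complex_Iic ha, integral_exp_mul_complex_Ioi hb,
    neg_div, sub_eq_add_neg]

/-- The density of the asymmetric Laplace distribution located at `0`, with rate `α` on the
negative and `β` on the positive half-line; it is a probability density for `0 < α` and
`0 < β`. -/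
noncomputable def asymmetricLaplacePDFReal (α β x : ℝ) : ℝ :=
  α * β / (α + β) * if x < 0 then Real.exp (α * x) else Real.exp (-β * x)

lemma measurable_asymmetricLaplacePDFReal (α β : ℝ) :
    Measurable (asymmetricLaplacePDFReal α β) :=
  (Measurable.ite measurableSet_Iio (by fun_prop) (by fun_prop)).const_mul _

variable {α β : ℝ}

lemma asymmetricLaplacePDFReal_nonneg (hα : 0 ≤ α) (hβ : 0 ≤ β) :
    0 ≤ asymmetricLaplacePDFReal α β := by
  intro x
  unfold asymmetricLaplacePDFReal
  split_ifs <;> positivity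

lemma asymmetricLaplacePDFReal_smul_cexp (α β : ℝ) (z : ℂ) (x : ℝ) :
    asymmetricLaplacePDFReal α β x • Complex.exp (z * x) =
      α * β / (α + β) * (Set.Iio (0 : ℝ)).piecewise (fun x : ℝ => Complex.exp ((α + z) * x))
        (fun x : ℝ => Complex.exp ((-β + z) * x)) x := by
  simp only [asymmetricLaplacePDFReal, Set.piecewise, Set.mem_Iio]
  split_ifs <;>
  · rw [Complex.real_smul, add_mul, Complex.exp_add]
    push_cast
    ring

lemma integrable_asymmetricLaplacePDFReal (hα : 0 < α) (hβ : 0 < β) :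
    Integrable (asymmetricLaplacePDFReal α β) := by
  have h := (integrable_piecewise_exp_mul_complex (a := α + 0) (b := -β + 0)
    (by simpa) (by simpa) 0).const_mul (α * β / (α + β) : ℂ)
  simp_rw [← asymmetricLaplacePDFReal_smul_cexp, zero_mul, Complex.exp_zero, Complex.real_smul,
    mul_one] at h
  exact h.re

lemma complexMGF_id_withDensity_asymmetricLaplacePDFReal (hα : 0 < α) (hβ : 0 < β) {z : ℂ}
    (hzα : -α < z.re) (hzβ : z.re < β) :
    complexMGF id (volume.withDensity fun x => ENNReal.ofReal (asymmetricLaplacePDFReal α β x)) z =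
      α * β / ((α + z) * (β - z)) := by
  have hleft : 0 < (α + z).re := by simpa using neg_lt_iff_pos_add'.1 hzα
  have hright : (-β + z).re < 0 := by simpa using hzβ
  have hα_add : (α + z : ℂ) ≠ 0 := fun h => hleft.ne' (by rw [h, Complex.zero_re])
  have hβ_add : (-β + z : ℂ) ≠ 0 := fun h => hright.ne (by rw [h, Complex.zero_re])
  have hβ_sub : (β - z : ℂ) ≠ 0 := by rwa [← neg_ne_zero, neg_sub, sub_eq_neg_add]
  have hsum : (α + β : ℂ) ≠ 0 := by exact_mod_cast (add_pos hα hβ).ne'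
  have hdensity := integral_withDensity_ofReal (μ := volume)
    (measurable_asymmetricLaplacePDFReal α β).aemeasurable
    (ae_of_all _ (asymmetricLaplacePDFReal_nonneg hα.le hβ.le)) fun x => Complex.exp (z * x)
  refine hdensity.trans ?_
  simp_rw [asymmetricLaplacePDFReal_smul_cexp]
  rw [integral_const_mul, integral_piecewise_exp_mul_complex hleft hright 0,
    Complex.ofReal_zero, mul_zero, mul_zero, Complex.exp_zero]
  field_simp
  ring

end AsymmetricLaplace

theorem exponential_mixture_of_gaussians_eq_stepMeasure_general {r m v α β : ℝ} (hv : 0 < v)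
    (hα : 0 < α) (hβ : 0 < β) (hprod : v * (α * β) = 2 * r) (hdiff : v * (α - β) = 2 * m) :
    (expMeasure r).bind (fun s : ℝ => gaussianReal (m * s) (Real.toNNReal (v * s))) =
      volume.withDensity fun x => ENNReal.ofReal (asymmetricLaplacePDFReal α β x) := by
  obtain rfl : r = v * (α * β) / 2 := by linarith
  obtain rfl : m = v * (α - β) / 2 := by linarith
  have hr : 0 < v * (α * β) / 2 := by positivity
  have := isProbabilityMeasure_expMeasure hr
  have := isFiniteMeasure_withDensity_ofReal (integrable_asymmetricLaplacePDFReal hα hβ).2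
  change (expMeasure _).bind (brownianKernel _ v) = _
  refine Measure.ext_of_charFun (funext fun t => ?_)
  rw [charFun_expMeasure_bind_brownianKernel hr _ hv.le, ← complexMGF_id_mul_I,
    complexMGF_id_withDensity_asymmetricLaplacePDFReal hα hβ (by simpa) (by simpa)]
  have hfactor : (α + t * Complex.I) * (β - t * Complex.I) =
      (α * β - t * (α - β) * Complex.I + t ^ 2 : ℂ) := by
    linear_combination (-t ^ 2 : ℂ) * Complex.I_sq
  have hv' : (v / 2 : ℂ) ≠ 0 := by exact_mod_cast (half_pos hv).ne'
  rw [hfactor, ← mul_div_mul_left (α * β : ℂ) _ hv']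
  push_cast
  congr 1 <;> ring

lemma stepDensity_eq_asymmetricLaplacePDFReal :
    stepDensity = asymmetricLaplacePDFReal (√2 + 1) (√2 - 1) := by
  have hsq : √2 ^ 2 = (2 : ℝ) := Real.sq_sqrt zero_le_two
  have hconst : (√2 + 1) * (√2 - 1) / (√2 + 1 + (√2 - 1)) = √2 / 4 := by
    field_simp
    linear_combination 2 * hsq
  have hleft : (1 - (2 + √2) / 4) * (√2 + 1) = √2 / 4 := by
    linear_combination (-1 / 4) * hsq
  have hright : (2 + √2) / 4 * (√2 - 1) = √2 / 4 := by
    linear_combination (1 / 4) * hsq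
  funext x
  rw [stepDensity, asymmetricLaplacePDFReal, hconst, hleft, hright, mul_ite]

/-- The law of `√2·B_T + 2T`, with `B` a standard Brownian motion and `T` an independent
exponential random variable of parameter `1` — i.e. the mixture of the Gaussian measures
`gaussianReal (2s) (2s)` over an exponential random parameter `s` of rate `1` — is the
measure with density `stepDensity` with respect to Lebesgue measure. -/
theorem exponential_mixture_of_gaussians_eq_stepMeasure :
    (expMeasure 1).bind (fun s : ℝ => gaussianReal (2 * s) (Real.toNNReal (2 * s)))
      = MeasureTheory.volume.withDensity fun x => ENNReal.ofReal (stepDensity x) := by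
  have hsq : √2 ^ 2 = (2 : ℝ) := Real.sq_sqrt zero_le_two
  rw [stepDensity_eq_asymmetricLaplacePDFReal]
  exact exponential_mixture_of_gaussians_eq_stepMeasure_general two_pos (by positivity)
    (sub_pos.2 Real.one_lt_sqrt_two) (by linear_combination 2 * hsq) (by ring)
end
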